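/- arXiv:1710.03318 — 7 statements merged into one kernel-verified Lean document; each statement's English description precedes it below -/
import Mathlib

section
/- For the Pinchuk map 𝒫 = (P, Q) : ℝ² → ℝ², the Jacobian determinant satisfies the polynomial identity det J𝒫(x, y) = t² + (t + f·(13 + 15h))² + f² for all (x, y) ∈ ℝ², where t, h, f are evaluated at (x, y). -/
open Filter Topology

noncomputable section

/-- `t = x·y − 1` -/
def tP (x y : ℝ) : ℝ := x * y - 1

/-- `h = t·(x·t + 1)` -/
def hP (x y : ℝ) : ℝ := tP x y * (x * tP x y + 1)

/-- `f = (x·t + 1)²·(t² + y)` -/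
def fP (x y : ℝ) : ℝ := (x * tP x y + 1) ^ 2 * ((tP x y) ^ 2 + y)

/-- First component `P = f + h` of the Pinchuk map. -/
def PP (x y : ℝ) : ℝ := fP x y + hP x y

/-- Second component `Q` of the Pinchuk map. -/
def QP (x y : ℝ) : ℝ :=
  -(tP x y) ^ 2 - 6 * tP x y * hP x y * (hP x y + 1) - 170 * fP x y * hP x y
    - 91 * (hP x y) ^ 2 - 195 * fP x y * (hP x y) ^ 2 - 69 * (hP x y) ^ 3
    - 75 * fP x y * (hP x y) ^ 3 - (75 / 4) * (hP x y) ^ 4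

/-- The Pinchuk map `𝒫 = (P, Q) : ℝ² → ℝ²`. -/
def Pinchuk (z : ℝ × ℝ) : ℝ × ℝ := (PP z.1 z.2, QP z.1 z.2)

/-- Determinant of the Jacobian matrix `J𝒫(x,y)` of the Pinchuk map at `(x, y)`. -/
def jacDetPinchuk (x y : ℝ) : ℝ :=
  deriv (fun u => PP u y) x * deriv (fun v => QP x v) y
    - deriv (fun v => PP x v) y * deriv (fun u => QP u y) x

/-- Derivative of the polynomial expression for `Q` along a curve `(t, h, f)`. -/
theorem hasDerivAt_Q_aux {t h f : ℝ → ℝ} {t' h' f' s : ℝ} (ht : HasDerivAt t t' s)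
    (hh : HasDerivAt h h' s) (hf : HasDerivAt f f' s) :
    HasDerivAt (fun s => -(t s) ^ 2 - 6 * t s * h s * (h s + 1) - 170 * f s * h s
      - 91 * (h s) ^ 2 - 195 * f s * (h s) ^ 2 - 69 * (h s) ^ 3
      - 75 * f s * (h s) ^ 3 - (75 / 4) * (h s) ^ 4)
      (-2 * t s * t' - 6 * (t' * h s * (h s + 1) + t s * h' * (2 * h s + 1))
        - 170 * (f' * h s + f s * h') - 182 * h s * h'
        - 195 * (f' * (h s) ^ 2 + 2 * f s * h s * h') - 207 * (h s) ^ 2 * h'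
        - 75 * (f' * (h s) ^ 3 + 3 * f s * (h s) ^ 2 * h') - 75 * (h s) ^ 3 * h') s := by
  have := ((((((((ht.pow 2).neg.sub (((ht.const_mul 6).mul hh).mul (hh.add_const 1))).sub
    ((hf.const_mul 170).mul hh)).sub ((hh.pow 2).const_mul 91)).sub
    ((hf.const_mul 195).mul (hh.pow 2))).sub ((hh.pow 3).const_mul 69)).sub
    ((hf.const_mul 75).mul (hh.pow 3))).sub ((hh.pow 4).const_mul (75 / 4)))
  refine this.congr_deriv ?_
  simp
  ring

theorem hasDerivAt_h_aux {a t : ℝ → ℝ} {a' t' s : ℝ} (ha : HasDerivAt a a' s)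
    (ht : HasDerivAt t t' s) :
    HasDerivAt (fun s => t s * (a s * t s + 1))
      (t' * (a s * t s + 1) + t s * (a' * t s + a s * t')) s :=
  ht.mul ((ha.mul ht).add_const 1)

theorem hasDerivAt_f_aux {a b t : ℝ → ℝ} {a' b' t' s : ℝ} (ha : HasDerivAt a a' s)
    (hb : HasDerivAt b b' s) (ht : HasDerivAt t t' s) :
    HasDerivAt (fun s => (a s * t s + 1) ^ 2 * ((t s) ^ 2 + b s))
      (2 * (a s * t s + 1) * (a' * t s + a s * t') * ((t s) ^ 2 + b s)
        + (a s * t s + 1) ^ 2 * (2 * t s * t' + b')) s := by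
  refine ((((ha.mul ht).add_const 1).pow 2).mul ((ht.pow 2).add hb)).congr_deriv ?_
  simp

/-- `det J𝒫(x, y) = t² + (t + f·(13 + 15h))² + f²` for all `(x, y) ∈ ℝ²`. -/
theorem pinchuk_jacobian_identity (x y : ℝ) :
    jacDetPinchuk x y =
      (tP x y) ^ 2 + (tP x y + fP x y * (13 + 15 * hP x y)) ^ 2 + (fP x y) ^ 2 := by
  have tx : HasDerivAt (fun u => tP u y) y x := by
    simpa [tP] using ((hasDerivAt_id x).mul_const y).sub_const 1
  have ty : HasDerivAt (fun v => tP x v) x y := by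
    simpa [tP] using ((hasDerivAt_id y).const_mul x).sub_const 1
  have hx := hasDerivAt_h_aux (hasDerivAt_id' x) tx
  have hy := hasDerivAt_h_aux (hasDerivAt_const y x) ty
  have fx := hasDerivAt_f_aux (hasDerivAt_id' x) (hasDerivAt_const x y) tx
  have fy := hasDerivAt_f_aux (hasDerivAt_const y x) (hasDerivAt_id' y) ty
  have Px : deriv (fun u => PP u y) x = _ := (fx.add hx).deriv
  have Py : deriv (fun v => PP x v) y = _ := (fy.add hy).deriv
  have Qx : deriv (fun u => QP u y) x = _ := (hasDerivAt_Q_aux tx hx fx).deriv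
  have Qy : deriv (fun v => QP x v) y = _ := (hasDerivAt_Q_aux ty hy fy).deriv
  unfold jacDetPinchuk
  rw [Px, Py, Qx, Qy]
  simp only [hP, fP, tP]
  ring
end
end

section
/- The Pinchuk map 𝒫 = (P, Q) : ℝ² → ℝ² is not injective: there exist distinct points (x₁, y₁) ≠ (x₂, y₂) in ℝ² with 𝒫(x₁, y₁) = 𝒫(x₂, y₂). -/
open Filter Topology

noncomputable section

/-- Rational parametrisation (by the value of `h`) of the level curve `P = -2`. -/
def curveX (h : ℝ) : ℝ := (-2 - h) * (h + 1) / (-2 - 2 * h - h ^ 2) ^ 2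

def curveY (h : ℝ) : ℝ := (-2 - 2 * h - h ^ 2) ^ 2 * (-2 - h - h ^ 2) / (-2 - h) ^ 2

def curveT (h : ℝ) : ℝ := h * (-2 - 2 * h - h ^ 2) / (-2 - h)

lemma curve_den (h : ℝ) : -2 - 2 * h - h ^ 2 ≠ 0 := by
  nlinarith [sq_nonneg (h + 1)]

lemma curve_t (h : ℝ) (hh : -2 - h ≠ 0) : tP (curveX h) (curveY h) = curveT h := by
  have hD := curve_den h
  have hD' : 2 * (-1 - h) - h ^ 2 ≠ 0 := by
    intro h0
    exact hD (by linarith)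
  unfold tP curveX curveY curveT
  field_simp
  ring

lemma curve_u (h : ℝ) (hh : -2 - h ≠ 0) :
    curveX h * curveT h + 1 = (-2 - h) / (-2 - 2 * h - h ^ 2) := by
  have hD := curve_den h
  have hD' : 2 * (-1 - h) - h ^ 2 ≠ 0 := by
    intro h0
    exact hD (by linarith)
  unfold curveX curveT
  field_simp
  ring

lemma curve_h (h : ℝ) (hh : -2 - h ≠ 0) : hP (curveX h) (curveY h) = h := by
  have hD := curve_den h
  have hD' : 2 * (-1 - h) - h ^ 2 ≠ 0 := by
    intro h0
    exact hD (by linarith)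
  unfold hP
  rw [curve_t h hh, curve_u h hh]
  unfold curveT
  field_simp

lemma curve_f (h : ℝ) (hh : -2 - h ≠ 0) : fP (curveX h) (curveY h) = -2 - h := by
  have hD := curve_den h
  have hD' : 2 * (-1 - h) - h ^ 2 ≠ 0 := by
    intro h0
    exact hD (by linarith)
  unfold fP
  rw [curve_t h hh, curve_u h hh]
  unfold curveT curveY
  field_simp
  ring

/-- `Q` along the curve. -/
def curveQ (h : ℝ) : ℝ :=
  -(curveT h) ^ 2 - 6 * curveT h * h * (h + 1) - 170 * (-2 - h) * h
    - 91 * h ^ 2 - 195 * (-2 - h) * h ^ 2 - 69 * h ^ 3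
    - 75 * (-2 - h) * h ^ 3 - (75 / 4) * h ^ 4

/-- the Pinchuk map is not injective. -/
theorem pinchuk_not_injective :
    ∃ z₁ z₂ : ℝ × ℝ, z₁ ≠ z₂ ∧ Pinchuk z₁ = Pinchuk z₂ := by
  have hT : ContinuousOn curveT (Set.Icc (-10) (-3)) := by
    unfold curveT
    refine ContinuousOn.div (by fun_prop) (by fun_prop) ?_
    intro h hh
    have := hh.2
    exact ne_of_gt (by linarith)
  have hQ : ContinuousOn curveQ (Set.Icc (-10) (-3)) := by
    unfold curveQ
    fun_prop
  have h0 : (0 : ℝ) ∈ Set.Icc (curveQ (-3)) (curveQ (-10)) := by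
    constructor <;> norm_num [curveQ, curveT]
  obtain ⟨h, hm, hz⟩ := intermediate_value_Icc' (by norm_num) hQ h0
  have h3 := hm.2
  have hne : -2 - h ≠ 0 := ne_of_gt (by linarith)
  refine ⟨(-1 / 2, -2), (curveX h, curveY h), ?_, ?_⟩
  · intro he
    have e : hP (-1 / 2) (-2) = hP (curveX h) (curveY h) :=
      congrArg (fun z : ℝ × ℝ => hP z.1 z.2) he
    rw [curve_h h hne] at e
    norm_num [hP, tP] at e
    linarith
  · have e1 : PP (curveX h) (curveY h) = -2 := by
      unfold PP
      rw [curve_f h hne, curve_h h hne]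
      ring
    have e2 : QP (curveX h) (curveY h) = 0 := by
      unfold QP
      rw [curve_f h hne, curve_h h hne, curve_t h hne]
      exact hz
    simp only [Pinchuk, e1, e2]
    norm_num [PP, QP, fP, hP, tP]
end
end

section
/- The Pinchuk map 𝒫 : ℝ² → ℝ² is not proper; equivalently, its asymptotic variety S_𝒫 is non-empty: there exists a sequence (ξ_k) in ℝ² with ‖ξ_k‖ → ∞ such that 𝒫(ξ_k) converges to a point of ℝ². -/
open Filter Topology

noncomputable section

/-- the Pinchuk map is not proper: there exists a sequence `ξ` in `ℝ²`
with `‖ξ k‖ → ∞` such that `𝒫(ξ k)` converges to a point of `ℝ²`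
(the asymptotic variety `S_𝒫` is non-empty). -/
theorem pinchuk_not_proper :
    ∃ ξ : ℕ → ℝ × ℝ, Tendsto (fun k => ‖ξ k‖) atTop atTop ∧
      ∃ α : ℝ × ℝ, Tendsto (fun k => Pinchuk (ξ k)) atTop (𝓝 α) := by
  -- along `x = k + 1`, `y = 1 / x` we have `t = 0`, so `𝒫 = (1 / x, 0)`
  refine ⟨fun k => ((k : ℝ) + 1, 1 / ((k : ℝ) + 1)), ?_, (0, 0), ?_⟩
  · refine tendsto_atTop_mono (fun k => ?_) (tendsto_natCast_atTop_atTop (R := ℝ))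
    have h1 : ‖(k : ℝ) + 1‖ ≤ ‖(((k : ℝ) + 1, 1 / ((k : ℝ) + 1)) : ℝ × ℝ)‖ :=
      norm_fst_le (((k : ℝ) + 1, 1 / ((k : ℝ) + 1)) : ℝ × ℝ)
    have h2 := le_abs_self ((k : ℝ) + 1)
    rw [Real.norm_eq_abs] at h1
    linarith
  · have key : ∀ k : ℕ, Pinchuk ((k : ℝ) + 1, 1 / ((k : ℝ) + 1)) = (1 / ((k : ℝ) + 1), 0) := by
      intro k
      have hk : (k : ℝ) + 1 ≠ 0 := by positivity
      have ht : tP ((k : ℝ) + 1) (1 / ((k : ℝ) + 1)) = 0 := by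
        unfold tP
        rw [mul_one_div_cancel hk, sub_self]
      simp only [Pinchuk, PP, QP, fP, hP, ht]
      simp
    simp only [key]
    exact tendsto_one_div_add_atTop_nhds_zero_nat.prodMk_nhds tendsto_const_nhds
end
end

section
/- The two points (0, 0) and (−1, −163/4) of the asymptotic variety of the Pinchuk map have no inverse images: there is no (x, y) ∈ ℝ² with 𝒫(x, y) = (0, 0), and no (x, y) ∈ ℝ² with 𝒫(x, y) = (−1, −163/4). -/
open Filter Topology

noncomputable section

/-- The key relation `t·f = h·(f − h − h²)`. -/
theorem tP_mul_fP (x y : ℝ) :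
    tP x y * fP x y = hP x y * (fP x y - hP x y - hP x y ^ 2) := by
  unfold fP hP tP
  ring

/-- the points `(0, 0)` and `(−1, −163/4)` of the asymptotic variety
of the Pinchuk map have no inverse images. -/
theorem pinchuk_points_without_preimage :
    (¬ ∃ z : ℝ × ℝ, Pinchuk z = (0, 0)) ∧
      (¬ ∃ z : ℝ × ℝ, Pinchuk z = (-1, -163 / 4)) := by
  constructor
  · rintro ⟨⟨x, y⟩, hz⟩
    simp only [Pinchuk, Prod.mk.injEq] at hz
    obtain ⟨h1, h2⟩ := hz
    have key := tP_mul_fP x y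
    have hh : hP x y = tP x y * (x * tP x y + 1) := rfl
    have hf0 : fP x y = (x * tP x y + 1) ^ 2 * ((tP x y) ^ 2 + y) := rfl
    have ht : tP x y = x * y - 1 := rfl
    unfold PP at h1
    unfold QP at h2
    generalize tP x y = t at *
    generalize hP x y = h at *
    generalize fP x y = f at *
    have hf : f = -h := by linarith
    subst hf
    by_cases h0 : h = 0
    · subst h0
      have t0 : t = 0 := by
        have : t ^ 2 = 0 := by linarith
        exact pow_eq_zero_iff (two_ne_zero) |>.1 this
      subst t0
      have y0 : y = 0 := by linarith
      subst y0
      linarith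
    · have t1 : t = h * (h + 2) := by
        apply mul_left_cancel₀ h0
        linarith
      have h3 : h ^ 2 * (197 / 4 * h ^ 2 + 104 * h + 63) = 0 := by
        rw [t1] at h2
        linarith
      have : 0 < h ^ 2 := by positivity
      rcases mul_eq_zero.1 h3 with h4 | h4
      · linarith
      · nlinarith [sq_nonneg (197 * h + 208)]
  · rintro ⟨⟨x, y⟩, hz⟩
    simp only [Pinchuk, Prod.mk.injEq] at hz
    obtain ⟨h1, h2⟩ := hz
    have key := tP_mul_fP x y
    have hh : hP x y = tP x y * (x * tP x y + 1) := rfl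
    unfold PP at h1
    unfold QP at h2
    generalize tP x y = t at *
    generalize hP x y = h at *
    generalize fP x y = f at *
    have hf : f = -1 - h := by linarith
    subst hf
    by_cases h0 : h + 1 = 0
    · have hm : h = -1 := by linarith
      subst hm
      have t0 : t = 0 := by
        have : t ^ 2 = 0 := by linarith
        exact pow_eq_zero_iff (two_ne_zero) |>.1 this
      subst t0
      linarith
    · have t1 : t = h * (h + 1) := by
        apply mul_left_cancel₀ h0
        linarith
      have h3 : (h + 1) ^ 2 * (197 * h ^ 2 + 354 * h + 163) = 0 := by
        rw [t1] at h2
        linarith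
      have : 0 < (h + 1) ^ 2 := by positivity
      rcases mul_eq_zero.1 h3 with h4 | h4
      · linarith
      · nlinarith [sq_nonneg (197 * h + 177)]
end
end

section
/- Let F : ℝⁿ → ℝⁿ be a polynomial map whose Jacobian determinant det JF is not identically zero, let Sing F = {x ∈ ℝⁿ : det JF(x) = 0}, M_F = ℝⁿ ∖ Sing F, and K₀(F) = F(Sing F). Let ψ = (ψ₁, …, ψ_p) : M_F → ℝ^p be a continuous map such that ψ(ξ_k) → 0 for every sequence (ξ_k) in M_F with ‖ξ_k‖ → ∞, and ψ(ξ_k) → 0 for every sequence (ξ_k) in M_F converging to a point of Sing F. Then the closure in ℝ^{n+p} of the image (F, ψ)(M_F) equals (F, ψ)(M_F) ∪ ((K₀(F) ∪ S_F) × {0_{ℝ^p}}). -/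
open Filter Topology

/-- Lemma on Valette varieties: for a polynomial map `F : ℝⁿ → ℝⁿ`
whose Jacobian determinant is not identically zero, with `Sing F` its critical set,
`M_F = ℝⁿ ∖ Sing F`, `K₀(F) = F(Sing F)` and `S_F` the asymptotic variety, and for
any continuous `ψ : M_F → ℝ^p` tending to `0` along sequences of `M_F` going to
infinity or converging to a point of `Sing F`, the closure of `(F, ψ)(M_F)` in
`ℝ^{n+p}` equals `(F, ψ)(M_F) ∪ ((K₀(F) ∪ S_F) × {0})`. -/
theorem valette_variety_closure (n p : ℕ)
    (F : EuclideanSpace ℝ (Fin n) → EuclideanSpace ℝ (Fin n))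
    (hFpoly : ∃ Fc : Fin n → MvPolynomial (Fin n) ℝ,
      ∀ (x : EuclideanSpace ℝ (Fin n)) (i : Fin n), F x i = MvPolynomial.eval x (Fc i))
    (SingF : Set (EuclideanSpace ℝ (Fin n)))
    (hSingF : SingF = {x | Matrix.det
      (Matrix.of fun i j : Fin n =>
        fderiv ℝ (fun y => F y i) x (EuclideanSpace.single j 1)) = 0})
    (hJacNotIdZero : SingF ≠ Set.univ)
    (ψ : EuclideanSpace ℝ (Fin n) → EuclideanSpace ℝ (Fin p))
    (hψcont : ContinuousOn ψ SingFᶜ)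
    (hψinf : ∀ ξ : ℕ → EuclideanSpace ℝ (Fin n), (∀ k, ξ k ∈ SingFᶜ) →
      Tendsto (fun k => ‖ξ k‖) atTop atTop → Tendsto (fun k => ψ (ξ k)) atTop (𝓝 0))
    (hψsing : ∀ ξ : ℕ → EuclideanSpace ℝ (Fin n), (∀ k, ξ k ∈ SingFᶜ) →
      ∀ x ∈ SingF, Tendsto ξ atTop (𝓝 x) → Tendsto (fun k => ψ (ξ k)) atTop (𝓝 0))
    (SF : Set (EuclideanSpace ℝ (Fin n)))
    (hSF : SF = {α | ∃ ξ : ℕ → EuclideanSpace ℝ (Fin n),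
      Tendsto (fun k => ‖ξ k‖) atTop atTop ∧ Tendsto (fun k => F (ξ k)) atTop (𝓝 α)}) :
    closure ((fun x => (F x, ψ x)) '' SingFᶜ) =
      ((fun x => (F x, ψ x)) '' SingFᶜ) ∪
        ((F '' SingF ∪ SF) ×ˢ ({0} : Set (EuclideanSpace ℝ (Fin p)))) := by
  obtain ⟨Fc, hFc⟩ := hFpoly
  have hFan : ∀ i, AnalyticOnNhd ℝ (fun y : EuclideanSpace ℝ (Fin n) => F y i) Set.univ := by
    intro i
    have h1 : (fun y : EuclideanSpace ℝ (Fin n) => F y i)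
        = fun y => MvPolynomial.aeval (fun j => y j) (Fc i) := by
      funext y
      rw [hFc y i, MvPolynomial.aeval_eq_eval]
    rw [h1]
    intro x _
    refine AnalyticAt.aeval_mvPolynomial (fun j => ?_) (Fc i)
    exact (EuclideanSpace.proj j : EuclideanSpace ℝ (Fin n) →L[ℝ] ℝ).analyticAt x
  have hFcont : Continuous F := by
    have h2 : Continuous fun y => (WithLp.equiv 2 (Fin n → ℝ)) (F y) := by
      refine continuous_pi fun i => ?_
      have := (hFan i).continuousOn
      rw [continuousOn_univ] at this
      exact this
    exact (PiLp.continuous_toLp 2 (fun _ : Fin n => ℝ)).comp h2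
  have hdense : Dense SingFᶜ := by
    rw [← interior_eq_empty_iff_dense_compl]
    by_contra hne
    obtain ⟨x, hx⟩ := Set.nonempty_iff_ne_empty.mpr hne
    apply hJacNotIdZero
    have hg : AnalyticOnNhd ℝ (fun x => Matrix.det
      (Matrix.of fun i j : Fin n =>
        fderiv ℝ (fun y => F y i) x (EuclideanSpace.single j 1))) Set.univ := by
      simp only [Matrix.det_apply']
      refine Finset.analyticOnNhd_fun_sum _ fun σ _ => ?_
      refine analyticOnNhd_const.mul ?_
      refine Finset.analyticOnNhd_fun_prod _ fun j _ => ?_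
      simp only [Matrix.of_apply]
      exact fun z hz => ((ContinuousLinearMap.apply ℝ ℝ
        (EuclideanSpace.single j (1 : ℝ))).analyticAt _).comp ((hFan (σ j)).fderiv z hz)
    have hev := mem_interior_iff_mem_nhds.mp hx
    have hz := hg.eqOn_zero_of_preconnected_of_eventuallyEq_zero isPreconnected_univ
      (Set.mem_univ x) (by
        filter_upwards [hev] with y hy
        rw [hSingF] at hy
        exact hy)
    rw [hSingF]
    ext y
    simpa using hz (Set.mem_univ y)
  apply Set.Subset.antisymm
  · rintro ⟨a, b⟩ hab
    obtain ⟨u, hu, hlim⟩ := mem_closure_iff_seq_limit.mp hab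
    choose ξ hξ hξu using hu
    have hlim' : Tendsto (fun k => (F (ξ k), ψ (ξ k))) atTop (𝓝 (a, b)) := by
      have : (fun k => (F (ξ k), ψ (ξ k))) = u := funext hξu
      rw [this]; exact hlim
    have ha : Tendsto (fun k => F (ξ k)) atTop (𝓝 a) := (Prod.tendsto_iff _ _).mp hlim' |>.1
    have hb : Tendsto (fun k => ψ (ξ k)) atTop (𝓝 b) := (Prod.tendsto_iff _ _).mp hlim' |>.2
    by_cases hinf : Tendsto (fun k => ‖ξ k‖) atTop atTop
    · right
      refine ⟨Or.inr ?_, tendsto_nhds_unique hb (hψinf ξ hξ hinf)⟩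
      rw [hSF]
      exact ⟨ξ, hinf, ha⟩
    · rw [tendsto_atTop] at hinf
      push Not at hinf
      obtain ⟨R, hR⟩ := hinf
      obtain ⟨x, -, φ, hφ, hx⟩ := tendsto_subseq_of_frequently_bounded
        (Metric.isBounded_ball (x := (0 : EuclideanSpace ℝ (Fin n))) (r := R)) (x := ξ)
        (hR.mono fun k hk => by simpa using hk)
      have hFx : a = F x := tendsto_nhds_unique (ha.comp hφ.tendsto_atTop)
        ((hFcont.tendsto x).comp hx)
      by_cases hxs : x ∈ SingF
      · right
        exact ⟨Or.inl ⟨x, hxs, hFx.symm⟩, tendsto_nhds_unique (hb.comp hφ.tendsto_atTop)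
          (hψsing (ξ ∘ φ) (fun k => hξ _) x hxs hx)⟩
      · left
        have hψx : Tendsto (fun k => ψ ((ξ ∘ φ) k)) atTop (𝓝 (ψ x)) :=
          (hψcont x hxs).tendsto.comp
            (tendsto_nhdsWithin_iff.mpr ⟨hx, Eventually.of_forall fun k => hξ _⟩)
        exact ⟨x, hxs, Prod.ext hFx.symm
          (tendsto_nhds_unique hψx (hb.comp hφ.tendsto_atTop))⟩
  · apply Set.union_subset subset_closure
    rintro ⟨a, b⟩ ⟨ha, hb⟩
    have hb0 : b = 0 := hb
    subst hb0
    rcases ha with ⟨x, hx, hxa⟩ | ha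
    · obtain ⟨ξ, hξ, hlim⟩ := mem_closure_iff_seq_limit.mp (hdense x)
      have hxa' : F x = a := hxa
      subst hxa'
      exact mem_closure_iff_seq_limit.mpr ⟨fun k => (F (ξ k), ψ (ξ k)),
        fun k => ⟨ξ k, hξ k, rfl⟩,
        ((hFcont.tendsto x).comp hlim).prodMk_nhds (hψsing ξ hξ x hx hlim)⟩
    · rw [hSF] at ha
      obtain ⟨ξ, hinf, hlim⟩ := ha
      have hex : ∀ k : ℕ, ∃ y ∈ SingFᶜ, dist y (ξ k) < 1 ∧
          dist (F y) (F (ξ k)) < 1 / ((k : ℝ) + 1) := by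
        intro k
        have hpos : (0 : ℝ) < 1 / ((k : ℝ) + 1) := by positivity
        have h1 : ∀ᶠ y in 𝓝 (ξ k), dist y (ξ k) < 1 := Metric.ball_mem_nhds _ one_pos
        have h2 : ∀ᶠ y in 𝓝 (ξ k), dist (F y) (F (ξ k)) < 1 / ((k : ℝ) + 1) :=
          (hFcont.tendsto (ξ k)) (Metric.ball_mem_nhds _ hpos)
        obtain ⟨y, hy, hyS⟩ := mem_closure_iff_nhds.mp (hdense (ξ k)) _ (h1.and h2)
        exact ⟨y, hyS, hy⟩
      choose η hη hd hFd using hex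
      have hηinf : Tendsto (fun k => ‖η k‖) atTop atTop := by
        refine tendsto_atTop_mono (fun k => ?_) (tendsto_atTop_add_const_right _ (-1 : ℝ) hinf)
        have h3 := hd k
        rw [dist_comm, dist_eq_norm] at h3
        have h4 := norm_sub_norm_le (ξ k) (η k)
        linarith
      have hηF : Tendsto (fun k => F (η k)) atTop (𝓝 a) := by
        refine (tendsto_iff_of_dist ?_).mpr hlim
        exact squeeze_zero (fun _ => dist_nonneg) (fun k => (hFd k).le)
          tendsto_one_div_add_atTop_nhds_zero_nat
      exact mem_closure_iff_seq_limit.mpr ⟨fun k => (F (η k), ψ (η k)),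
        fun k => ⟨η k, hη k, rfl⟩, hηF.prodMk_nhds (hψinf η hη hηinf)⟩
end

section
/- Let F : ℂ³ → ℂ³ be the polynomial map F(x, y, z) = (x, y, (x² + y²)·z). Then the asymptotic variety of F is the algebraic hypersurface S_F = {(α, β, γ) ∈ ℂ³ : α² + β² = 0}. -/
open Filter Topology

noncomputable section

/-- The polynomial map `F : ℂ³ → ℂ³`, `F(x, y, z) = (x, y, (x² + y²)·z)`. -/
def Fc (w : ℂ × ℂ × ℂ) : ℂ × ℂ × ℂ := (w.1, w.2.1, (w.1 ^ 2 + w.2.1 ^ 2) * w.2.2)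

/-- the asymptotic variety of `F(x, y, z) = (x, y, (x² + y²)·z)` is
the algebraic hypersurface `{(α, β, γ) ∈ ℂ³ : α² + β² = 0}`. -/
theorem asymptotic_variety_complex_example :
    {α : ℂ × ℂ × ℂ | ∃ ξ : ℕ → ℂ × ℂ × ℂ,
        Tendsto (fun k => ‖ξ k‖) atTop atTop ∧ Tendsto (fun k => Fc (ξ k)) atTop (𝓝 α)} =
      {α : ℂ × ℂ × ℂ | α.1 ^ 2 + α.2.1 ^ 2 = 0} := by
  ext ⟨a, b, c⟩
  simp only [Set.mem_ofPred_eq]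
  constructor
  · rintro ⟨ξ, hn, hF⟩
    by_contra hs
    have h1 : Tendsto (fun k => (ξ k).1) atTop (𝓝 a) :=
      (continuous_fst.tendsto _).comp hF
    have h2 : Tendsto (fun k => (ξ k).2.1) atTop (𝓝 b) :=
      ((continuous_fst.comp continuous_snd).tendsto _).comp hF
    have h3 : Tendsto (fun k => ((ξ k).1 ^ 2 + (ξ k).2.1 ^ 2) * (ξ k).2.2) atTop (𝓝 c) :=
      ((continuous_snd.comp continuous_snd).tendsto _).comp hF
    have hq : Tendsto (fun k => (ξ k).1 ^ 2 + (ξ k).2.1 ^ 2) atTop (𝓝 (a ^ 2 + b ^ 2)) :=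
      (h1.pow 2).add (h2.pow 2)
    have h4 : Tendsto (fun k => (ξ k).2.2) atTop (𝓝 (c / (a ^ 2 + b ^ 2))) := by
      refine (h3.div hq hs).congr' ?_
      filter_upwards [hq.eventually_ne hs] with k hk
      exact mul_div_cancel_left₀ _ hk
    have h5 : Tendsto ξ atTop (𝓝 (a, b, c / (a ^ 2 + b ^ 2))) :=
      h1.prodMk_nhds (h2.prodMk_nhds h4)
    exact not_tendsto_nhds_of_tendsto_atTop hn _ h5.norm
  · intro hs
    have key : ∀ ξ : ℕ → ℂ × ℂ × ℂ, Tendsto (fun k => ‖(ξ k).2.2‖) atTop atTop →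
        Tendsto (fun k => ‖ξ k‖) atTop atTop := fun ξ h =>
      tendsto_atTop_mono (fun k => (norm_snd_le (ξ k).2).trans (norm_snd_le (ξ k))) h
    by_cases hc : c = 0
    · subst hc
      refine ⟨fun k => (a, b, (k : ℂ)), key _ ?_, ?_⟩
      · simpa using tendsto_natCast_atTop_atTop (R := ℝ)
      · simp only [Fc, hs, zero_mul]
        exact tendsto_const_nhds
    · obtain ⟨t, ht, ht0⟩ : ∃ t : ℕ → ℂ, Tendsto t atTop (𝓝 0) ∧ ∀ k, t k ≠ 0 :=
        ⟨fun k : ℕ => 1 / ((k : ℂ) + 1), tendsto_one_div_add_atTop_nhds_zero_nat,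
          fun k => one_div_ne_zero (Nat.cast_add_one_ne_zero k)⟩
      have hx : Tendsto (fun k => a + t k) atTop (𝓝 a) := by simpa using ht.const_add a
      have hq : Tendsto (fun k => (a + t k) ^ 2 + b ^ 2) atTop (𝓝 0) := by
        have := (hx.pow 2).add_const (b ^ 2)
        rwa [hs] at this
      have hq0 : ∀ᶠ k in atTop, (a + t k) ^ 2 + b ^ 2 ≠ 0 := by
        have h2 : ∀ᶠ k in atTop, 2 * a + t k ≠ 0 := by
          by_cases ha : a = 0
          · exact Eventually.of_forall fun k => by simpa [ha] using ht0 k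
          · have : Tendsto (fun k => 2 * a + t k) atTop (𝓝 (2 * a)) := by
              simpa using ht.const_add (2 * a)
            exact this.eventually_ne (by simpa using ha)
        filter_upwards [h2] with k hk
        have : (a + t k) ^ 2 + b ^ 2 = t k * (2 * a + t k) := by
          linear_combination hs
        rw [this]
        exact mul_ne_zero (ht0 k) hk
      refine ⟨fun k => (a + t k, b, c / ((a + t k) ^ 2 + b ^ 2)), key _ ?_, ?_⟩
      · have h1 : Tendsto (fun k => ‖((a + t k) ^ 2 + b ^ 2)⁻¹‖) atTop atTop :=
          (tendsto_norm_cobounded_atTop.comp (tendsto_inv₀_nhdsNE_zero (α := ℂ))).comp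
            (tendsto_nhdsWithin_iff.2 ⟨hq, hq0⟩)
        have := h1.const_mul_atTop (norm_pos_iff.2 hc)
        simpa [div_eq_mul_inv] using this
      · refine hx.prodMk_nhds (tendsto_const_nhds.prodMk_nhds ?_)
        refine tendsto_const_nhds.congr' ?_
        filter_upwards [hq0] with k hk
        exact (mul_div_cancel₀ c hk).symm
end
end

section
/- Let F : ℝ³ → ℝ³ be the polynomial map F(x, y, z) = (x, y, (x² + y²)·z). Then the asymptotic variety of F is the line S_F = {(α, β, γ) ∈ ℝ³ : α = 0 and β = 0}, which has dimension 1 (in particular it is not a hypersurface in ℝ³). -/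
open Filter Topology

noncomputable section

/-- The polynomial map `F : ℝ³ → ℝ³`, `F(x, y, z) = (x, y, (x² + y²)·z)`. -/
def Fr (w : ℝ × ℝ × ℝ) : ℝ × ℝ × ℝ := (w.1, w.2.1, (w.1 ^ 2 + w.2.1 ^ 2) * w.2.2)

/-- the asymptotic variety of the real map
`F(x, y, z) = (x, y, (x² + y²)·z)` is the line `{(α, β, γ) ∈ ℝ³ : α = 0 ∧ β = 0}`,
i.e. the one-dimensional set `{(0, 0, γ) : γ ∈ ℝ}` (not a hypersurface in `ℝ³`). -/
theorem asymptotic_variety_real_example :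
    {α : ℝ × ℝ × ℝ | ∃ ξ : ℕ → ℝ × ℝ × ℝ,
        Tendsto (fun k => ‖ξ k‖) atTop atTop ∧ Tendsto (fun k => Fr (ξ k)) atTop (𝓝 α)} =
      {α : ℝ × ℝ × ℝ | α.1 = 0 ∧ α.2.1 = 0} ∧
    {α : ℝ × ℝ × ℝ | α.1 = 0 ∧ α.2.1 = 0} =
      Set.range (fun γ : ℝ => ((0 : ℝ), (0 : ℝ), γ)) := by
  refine ⟨?_, ?_⟩
  · ext ⟨a, b, c⟩
    simp only [Set.mem_ofPred_eq]
    constructor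
    · rintro ⟨ξ, hn, hF⟩
      have h1 : Tendsto (fun k => (ξ k).1) atTop (𝓝 a) := by
        have := (continuous_fst.tendsto (a, b, c)).comp hF
        exact this
      have h2 : Tendsto (fun k => (ξ k).2.1) atTop (𝓝 b) := by
        have := ((continuous_fst.comp continuous_snd).tendsto (a, b, c)).comp hF
        exact this
      have h3 : Tendsto (fun k => ((ξ k).1 ^ 2 + (ξ k).2.1 ^ 2) * (ξ k).2.2) atTop (𝓝 c) :=
        ((continuous_snd.comp continuous_snd).tendsto (a, b, c)).comp hF
      by_cases h0 : a ^ 2 + b ^ 2 = 0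
      · constructor <;> nlinarith [sq_nonneg a, sq_nonneg b]
      · exfalso
        have hq : Tendsto (fun k => (ξ k).1 ^ 2 + (ξ k).2.1 ^ 2) atTop (𝓝 (a ^ 2 + b ^ 2)) :=
          (h1.pow 2).add (h2.pow 2)
        have hz : Tendsto (fun k => (ξ k).2.2) atTop (𝓝 (c / (a ^ 2 + b ^ 2))) := by
          refine (h3.div hq h0).congr' ?_
          filter_upwards [hq.eventually_ne h0] with k hk
          simp only [Pi.div_apply]
          field_simp
        have hξ : Tendsto ξ atTop (𝓝 (a, b, c / (a ^ 2 + b ^ 2))) :=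
          h1.prodMk_nhds (h2.prodMk_nhds hz)
        exact not_tendsto_nhds_of_tendsto_atTop hn _ hξ.norm
    · rintro ⟨rfl, rfl⟩
      obtain ⟨s, hs⟩ : ∃ s : ℝ, (s = 1 ∧ 0 ≤ c) ∨ (s = -1 ∧ c ≤ 0) := by
        rcases le_total 0 c with h | h
        · exact ⟨1, Or.inl ⟨rfl, h⟩⟩
        · exact ⟨-1, Or.inr ⟨rfl, h⟩⟩
      refine ⟨fun k => (1 / ((k : ℝ) + 1), 0, c * ((k : ℝ) + 1) ^ 2 + s * ((k : ℝ) + 1)), ?_, ?_⟩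
      · refine tendsto_atTop_mono (fun k => ?_) (tendsto_natCast_atTop_atTop (R := ℝ))
        refine le_trans ?_ ((norm_snd_le _).trans (norm_snd_le _))
        have hk : (0 : ℝ) ≤ k := k.cast_nonneg
        simp only [Real.norm_eq_abs]
        rcases hs with ⟨rfl, hc⟩ | ⟨rfl, hc⟩
        · refine le_trans ?_ (le_abs_self _)
          nlinarith [mul_nonneg hc (sq_nonneg ((k : ℝ) + 1))]
        · refine le_trans ?_ (neg_le_abs _)
          nlinarith [mul_nonneg (neg_nonneg.2 hc) (sq_nonneg ((k : ℝ) + 1))]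
      · have h := tendsto_one_div_add_atTop_nhds_zero_nat (𝕜 := ℝ)
        refine h.prodMk_nhds (tendsto_const_nhds.prodMk_nhds ?_)
        have h' : Tendsto (fun k : ℕ => c + s * (1 / ((k : ℝ) + 1))) atTop (𝓝 c) := by
          simpa using (h.const_mul s).const_add c
        refine h'.congr fun k => ?_
        have hk : (k : ℝ) + 1 ≠ 0 := by positivity
        field_simp
        ring
  · ext ⟨a, b, c⟩
    simp [eq_comm]
end
end
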